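/- Let R be a prime Noetherian ring of Krull dimension n, X a set of prime ideals p of R each with Kdim(R/p) = m ≤ n, and V = ∩_{p∈X} C(p). Suppose X has the right intersection condition: for every right ideal I, if I ∩ C(p) ≠ ∅ for all p ∈ X then I ∩ V ≠ ∅. Define k = {right ideals I | I ∩ V ≠ ∅} and g = {right ideals I | Kdim(R/I) < m}. Then g ⊆ k. -/

import Mathlib

open MulOpposite
universe u

/-- Gabriel–Rentschler deviation: `DevLE α P` means the deviation of the
poset `P` is at most `α`. -/
def DevLE : Ordinal.{u} → (P : Type u) → [inst : PartialOrder P] → Prop :=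
  fun α P _ =>
    ∀ f : ℕ → P, (∀ n, f (n + 1) ≤ f n) →
      ∃ N : ℕ, ∀ n, N ≤ n →
        f (n + 1) = f n ∨ ∃ β, ∃ _ : β < α, DevLE β (Set.Icc (f (n + 1)) (f n))
termination_by α => α

/-- Right ideals of `R`, as submodules of `R` viewed as a right module. -/
abbrev RightIdeal (R : Type u) [Ring R] : Type u := Submodule Rᵐᵒᵖ R

/-- Gabriel–Rentschler Krull dimension of a right `R`-module `M`
(least `α` bounding the deviation of the submodule lattice; junk value `0`
if no such ordinal exists). -/
noncomputable def rKdim (R : Type u) [Ring R] (M : Type u) [AddCommGroup M]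
    [Module Rᵐᵒᵖ M] : Ordinal.{u} :=
  sInf {α : Ordinal.{u} | DevLE α (Submodule Rᵐᵒᵖ M)}

/-- `x⁻¹(I) = {a | x * a ∈ I}`, a right ideal. -/
def preIdeal {R : Type u} [Ring R] (x : R) (I : RightIdeal R) : RightIdeal R where
  carrier := {a : R | x * a ∈ I}
  add_mem' := by intro a b ha hb; simpa [mul_add] using add_mem ha hb
  zero_mem' := by simp
  smul_mem' := by
    intro r a ha
    show x * (op (unop r) • a) ∈ I
    rw [op_smul_eq_mul, ← mul_assoc]
    exact I.smul_mem r ha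

/-- `S` is a right Ore set. -/
def RightOre {R : Type u} [Ring R] (S : Set R) : Prop :=
  ∀ r : R, ∀ s ∈ S, ∃ r' : R, ∃ s' ∈ S, r * s' = s * r'

/-- A multiplicatively closed set. -/
def MulClosed {R : Type u} [Ring R] (S : Set R) : Prop :=
  ∀ a ∈ S, ∀ b ∈ S, a * b ∈ S

/-- A Gabriel filter of right ideals. -/
def IsGabrielFilter {R : Type u} [Ring R] (F : Set (RightIdeal R)) : Prop :=
  (∀ I ∈ F, ∀ J : RightIdeal R, I ≤ J → J ∈ F) ∧
  (∀ I ∈ F, ∀ J ∈ F, I ⊓ J ∈ F) ∧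
  (∀ I ∈ F, ∀ x : R, preIdeal x I ∈ F)

/-- A right ideal that is two-sided. -/
def TwoSided {R : Type u} [Ring R] (I : RightIdeal R) : Prop :=
  ∀ r : R, ∀ x ∈ I, r * x ∈ I

/-- A (two-sided) prime ideal of a possibly noncommutative ring. -/
def IsPrimeIdeal {R : Type u} [Ring R] (p : RightIdeal R) : Prop :=
  TwoSided p ∧ p ≠ ⊤ ∧ ∀ a b : R, (∀ r : R, a * r * b ∈ p) → a ∈ p ∨ b ∈ p

/-- `C(p)`: the elements of `R` regular modulo `p`. -/
def CMod {R : Type u} [Ring R] (p : RightIdeal R) : Set R :=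
  {c : R | (∀ a : R, c * a ∈ p → a ∈ p) ∧ (∀ a : R, a * c ∈ p → a ∈ p)}

/-- A prime ring. -/
def IsPrimeRing (R : Type u) [Ring R] : Prop :=
  ∀ a b : R, (∀ r : R, a * r * b = 0) → a = 0 ∨ b = 0

/-- A right module is `V`-torsion. -/
def IsTorsionBy' {R : Type u} [Ring R] (V : Set R) (M : Type u) [AddCommGroup M]
    [Module Rᵐᵒᵖ M] : Prop :=
  ∀ x : M, ∃ v ∈ V, op v • x = 0

/-- The annihilator (as a set) of a right module. -/
def annSet (R : Type u) [Ring R] (M : Type u) [AddCommGroup M] [Module Rᵐᵒᵖ M] :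
    Set R :=
  {a : R | ∀ x : M, op a • x = 0}

/-- `R` is right fully bounded: in every prime factor, every essential right
ideal contains a nonzero two-sided ideal. -/
def RightFullyBounded (R : Type u) [Ring R] : Prop :=
  ∀ p : RightIdeal R, IsPrimeIdeal p →
    ∀ I : RightIdeal R, p ≤ I →
      (∀ J : RightIdeal R, p < J → p < I ⊓ J) →
      ∃ A : RightIdeal R, TwoSided A ∧ p < A ∧ A ≤ I

/-- A uniform right module: any two nonzero submodules intersect nontrivially. -/
def IsUniformMod (R : Type u) [Ring R] (M : Type u) [AddCommGroup M]
    [Module Rᵐᵒᵖ M] : Prop :=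
  ∀ N N' : Submodule Rᵐᵒᵖ M, N ≠ ⊥ → N' ≠ ⊥ → N ⊓ N' ≠ ⊥

/-- The annihilator (as a set of elements of `R`) of a submodule. -/
def annSubSet (R : Type u) [Ring R] {M : Type u} [AddCommGroup M]
    [Module Rᵐᵒᵖ M] (N : Submodule Rᵐᵒᵖ M) : Set R :=
  {a : R | ∀ x ∈ N, op a • x = 0}

/-- `q` is an associated (assassinator) prime of the right module `M`:
`q` is prime and is the annihilator of a nonzero submodule all of whose
nonzero submodules also have annihilator `q`. -/
def IsAssocPrime (R : Type u) [Ring R] (q : RightIdeal R) (M : Type u)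
    [AddCommGroup M] [Module Rᵐᵒᵖ M] : Prop :=
  IsPrimeIdeal q ∧ ∃ N : Submodule Rᵐᵒᵖ M, N ≠ ⊥ ∧
    ∀ N' : Submodule Rᵐᵒᵖ M, N' ≤ N → N' ≠ ⊥ → annSubSet R N' = (q : Set R)

/-- A critical right module: nonzero, and every proper quotient has strictly
smaller Krull dimension. -/
def IsCriticalMod (R : Type u) [Ring R] (M : Type u) [AddCommGroup M]
    [Module Rᵐᵒᵖ M] : Prop :=
  Nontrivial M ∧
    ∀ N : Submodule Rᵐᵒᵖ M, N ≠ ⊥ → rKdim R (M ⧸ N) < rKdim R M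

/-- `M` is a fully faithful right `R/q`-module: `q` annihilates `M` and every
nonzero submodule of `M` has annihilator exactly `q`. -/
def FullyFaithfulOver (R : Type u) [Ring R] (q : RightIdeal R) (M : Type u)
    [AddCommGroup M] [Module Rᵐᵒᵖ M] : Prop :=
  (q : Set R) ⊆ annSet R M ∧
    ∀ N : Submodule Rᵐᵒᵖ M, N ≠ ⊥ → annSubSet R N = (q : Set R)

theorem DevLE_iff (α : Ordinal.{u}) (P : Type u) [PartialOrder P] :
    DevLE α P ↔ ∀ f : ℕ → P, (∀ n, f (n + 1) ≤ f n) →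
      ∃ N : ℕ, ∀ n, N ≤ n →
        f (n + 1) = f n ∨ ∃ β, ∃ _ : β < α, DevLE β (Set.Icc (f (n + 1)) (f n)) := by
  rw [DevLE]

theorem DevLE.mono {α β : Ordinal.{u}} (h : α ≤ β) {P : Type u} [PartialOrder P]
    (hP : DevLE α P) : DevLE β P := by
  rw [DevLE_iff] at hP ⊢
  intro f hf
  obtain ⟨N, hN⟩ := hP f hf
  refine ⟨N, fun n hn => ?_⟩
  rcases hN n hn with h1 | ⟨γ, hγ, h1⟩
  · exact Or.inl h1
  · exact Or.inr ⟨γ, lt_of_lt_of_le hγ h, h1⟩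

theorem DevLE.of_strictMono (α : Ordinal.{u}) : ∀ {P Q : Type u} [PartialOrder P]
    [PartialOrder Q] (g : P → Q) (_ : StrictMono g) (_ : DevLE α Q), DevLE α P := by
  induction α using WellFoundedLT.induction with
  | ind α ih =>
    intro P Q _ _ g hg hQ
    rw [DevLE_iff] at hQ ⊢
    intro f hf
    obtain ⟨N, hN⟩ := hQ (fun n => g (f n)) (fun n => hg.monotone (hf n))
    refine ⟨N, fun n hn => ?_⟩
    rcases hN n hn with h1 | ⟨γ, hγ, h1⟩
    · left
      by_contra hne
      exact (hg (lt_of_le_of_ne (hf n) hne)).ne h1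
    · right
      refine ⟨γ, hγ, ih γ hγ (fun x : Set.Icc (f (n + 1)) (f n) =>
        (⟨g x.1, hg.monotone x.2.1, hg.monotone x.2.2⟩ :
          Set.Icc (g (f (n + 1))) (g (f n)))) ?_ h1⟩
      intro x y hxy
      exact hg (show x.1 < y.1 from hxy)

theorem DevLE.prod (α : Ordinal.{u}) : ∀ {P Q : Type u} [PartialOrder P]
    [PartialOrder Q] (_ : DevLE α P) (_ : DevLE α Q), DevLE α (P × Q) := by
  induction α using WellFoundedLT.induction with
  | ind α ih =>
    intro P Q _ _ hP hQ
    rw [DevLE_iff] at hP hQ ⊢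
    intro f hf
    obtain ⟨N, hN⟩ := hP (fun n => (f n).1) (fun n => (hf n).1)
    obtain ⟨M, hM⟩ := hQ (fun n => (f n).2) (fun n => (hf n).2)
    refine ⟨max N M, fun n hn => ?_⟩
    rcases hN n (le_trans (le_max_left _ _) hn) with h1 | ⟨β, hβ, h1⟩
    · rcases hM n (le_trans (le_max_right _ _) hn) with h2 | ⟨γ, hγ, h2⟩
      · exact Or.inl (Prod.ext h1 h2)
      · right
        refine ⟨γ, hγ, DevLE.of_strictMono γ (fun x : Set.Icc (f (n + 1)) (f n) =>
          (⟨x.1.2, x.2.1.2, x.2.2.2⟩ : Set.Icc (f (n + 1)).2 (f n).2)) ?_ h2⟩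
        intro x y hxy
        have hxy' : x.1 < y.1 := hxy
        have e : ∀ z : Set.Icc (f (n + 1)) (f n), z.1.1 = (f n).1 := fun z =>
          le_antisymm z.2.2.1 (h1 ▸ z.2.1.1)
        show x.1.2 < y.1.2
        rcases Prod.lt_iff.1 hxy' with h | h
        · exact absurd ((e x).trans (e y).symm) h.1.ne
        · exact h.2
    · rcases hM n (le_trans (le_max_right _ _) hn) with h2 | ⟨γ, hγ, h2⟩
      · right
        refine ⟨β, hβ, DevLE.of_strictMono β (fun x : Set.Icc (f (n + 1)) (f n) =>
          (⟨x.1.1, x.2.1.1, x.2.2.1⟩ : Set.Icc (f (n + 1)).1 (f n).1)) ?_ h1⟩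
        intro x y hxy
        have hxy' : x.1 < y.1 := hxy
        have e : ∀ z : Set.Icc (f (n + 1)) (f n), z.1.2 = (f n).2 := fun z =>
          le_antisymm z.2.2.2 (h2 ▸ z.2.1.2)
        show x.1.1 < y.1.1
        rcases Prod.lt_iff.1 hxy' with h | h
        · exact h.1
        · exact absurd ((e x).trans (e y).symm) h.2.ne
      · right
        refine ⟨max β γ, max_lt hβ hγ, DevLE.of_strictMono _
          (fun x : Set.Icc (f (n + 1)) (f n) =>
          ((⟨x.1.1, x.2.1.1, x.2.2.1⟩, ⟨x.1.2, x.2.1.2, x.2.2.2⟩) :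
            Set.Icc (f (n + 1)).1 (f n).1 × Set.Icc (f (n + 1)).2 (f n).2)) ?_
          (ih _ (max_lt hβ hγ) (h1.mono (le_max_left _ _)) (h2.mono (le_max_right _ _)))⟩
        intro x y hxy
        exact Prod.lt_iff.2 (Prod.lt_iff.1 (show x.1 < y.1 from hxy))

/-- The modular-lattice form of the estimate for sums. -/
theorem DevLE.sup {L : Type u} [Lattice L] [IsModularLattice L] [OrderBot L]
    {α : Ordinal.{u}} {A B : L}
    (hA : DevLE α (Set.Iic A)) (hB : DevLE α (Set.Iic B)) : DevLE α (Set.Iic (A ⊔ B)) := by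
  have hAB : DevLE α (Set.Icc A (A ⊔ B)) := by
    refine DevLE.of_strictMono α (fun x : Set.Icc A (A ⊔ B) =>
      (⟨x.1 ⊓ B, inf_le_right⟩ : Set.Iic B)) ?_ hB
    intro x y hxy
    have hxy' : x.1 < y.1 := hxy
    have key : ∀ z : Set.Icc A (A ⊔ B), A ⊔ (z.1 ⊓ B) = z.1 := fun z => by
      rw [inf_comm, ← sup_inf_assoc_of_le B z.2.1]
      exact inf_eq_right.2 z.2.2
    refine lt_of_le_of_ne (inf_le_inf_right B hxy'.le) ?_
    intro h
    have h' : x.1 ⊓ B = y.1 ⊓ B := congrArg Subtype.val h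
    have := key x
    rw [h', key y] at this
    exact hxy'.ne this.symm
  refine DevLE.of_strictMono α (fun x : Set.Iic (A ⊔ B) =>
    ((⟨x.1 ⊓ A, inf_le_right⟩, ⟨x.1 ⊔ A, le_sup_right, sup_le x.2 le_sup_left⟩) :
      Set.Iic A × Set.Icc A (A ⊔ B))) ?_ (DevLE.prod α hA hAB)
  intro x y hxy
  have hxy' : x.1 < y.1 := hxy
  refine lt_of_le_of_ne ⟨inf_le_inf_right A hxy'.le, sup_le_sup_right hxy'.le A⟩ ?_
  intro h
  have h1 : x.1 ⊓ A = y.1 ⊓ A := congrArg (fun t => t.1.1) h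
  have h2 : x.1 ⊔ A = y.1 ⊔ A := congrArg (fun t => t.2.1) h
  exact hxy'.ne (eq_of_le_of_inf_le_of_sup_le hxy'.le h1.ge h2.ge)

section Goldie

/-- Left multiplication as a map of right modules. -/
def lmulR {S : Type u} [Ring S] (a : S) : S →ₗ[Sᵐᵒᵖ] S where
  toFun x := a * x
  map_add' := mul_add a
  map_smul' r x := by
    show a * (x * unop r) = (a * x) * unop r
    rw [mul_assoc]

/-- The right annihilator of an element. -/
def rAnn {S : Type u} [Ring S] (a : S) : RightIdeal S := preIdeal a ⊥

theorem mem_rAnn {S : Type u} [Ring S] {a x : S} : x ∈ rAnn a ↔ a * x = 0 := by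
  show a * x ∈ (⊥ : RightIdeal S) ↔ _
  simp

theorem rmul_mem {S : Type u} [Ring S] {J : RightIdeal S} {x : S} (hx : x ∈ J) (r : S) :
    x * r ∈ J := J.smul_mem (op r) hx

/-- The left annihilator of the right annihilator of an element. -/
def lrAnn {S : Type u} [Ring S] (c : S) : Ideal S where
  carrier := {y | ∀ x, c * x = 0 → y * x = 0}
  add_mem' := by
    intro a b ha hb x hx
    rw [add_mul, ha x hx, hb x hx, add_zero]
  zero_mem' := by intro x _; simp
  smul_mem' := by
    intro r a ha x hx
    show r * a * x = 0
    rw [mul_assoc, ha x hx, mul_zero]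

theorem mem_lrAnn {S : Type u} [Ring S] {c y : S} :
    y ∈ lrAnn c ↔ ∀ x, c * x = 0 → y * x = 0 := Iff.rfl

variable {S : Type u} [Ring S]

theorem utumi [IsNoetherian Sᵐᵒᵖ S] (hS : IsPrimeRing S) (a : S)
    (h : ∀ s : S, IsNilpotent (s * a)) : a = 0 := by
  by_contra ha
  have hne : Set.Nonempty {I : RightIdeal S | ∃ s : S, s * a ≠ 0 ∧ I = rAnn (s * a)} :=
    ⟨rAnn (1 * a), 1, by simpa using ha, rfl⟩
  obtain ⟨_, ⟨s, hs, rfl⟩, hmax⟩ :=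
    WellFounded.has_min (wellFounded_gt : WellFounded ((· > ·) : RightIdeal S → _ → Prop)) _ hne
  have key : ∀ u : S, (s * a) * u * (s * a) = 0 := by
    intro u
    by_cases hu : u * (s * a) = 0
    · rw [mul_assoc, hu, mul_zero]
    have hnil : IsNilpotent (u * (s * a)) := by rw [← mul_assoc]; exact h _
    obtain ⟨k, hk, hk'⟩ : ∃ k, (u * (s * a)) ^ (k + 1) ≠ 0 ∧ (u * (s * a)) ^ (k + 2) = 0 := by
      by_contra hcon
      push Not at hcon
      have : ∀ k, (u * (s * a)) ^ (k + 1) ≠ 0 := by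
        intro k
        induction k with
        | zero => simpa using hu
        | succ k ih => exact hcon k ih
      obtain ⟨k, hk⟩ := hnil
      exact this k (by rw [pow_succ, hk, zero_mul])
    have e : (u * (s * a)) ^ (k + 1) = ((u * (s * a)) ^ k * u * s) * a := by
      rw [pow_succ]; simp only [mul_assoc]
    have hle : rAnn (s * a) ≤ rAnn ((u * (s * a)) ^ (k + 1)) := by
      intro x hx
      rw [mem_rAnn] at hx ⊢
      rw [pow_succ, mul_assoc, mul_assoc u, hx, mul_zero, mul_zero]
    have hnlt := hmax (rAnn ((u * (s * a)) ^ (k + 1))) ⟨_, e ▸ hk, by rw [e]⟩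
    have heq : rAnn (s * a) = rAnn ((u * (s * a)) ^ (k + 1)) := by
      by_contra hne
      exact hnlt (lt_of_le_of_ne hle hne)
    have : u * (s * a) ∈ rAnn (s * a) := by
      rw [heq, mem_rAnn, ← pow_succ]; exact hk'
    rw [mem_rAnn] at this
    rw [mul_assoc]; exact this
  exact hs (by simpa using hS _ _ key)

theorem rAnn_pow_mono (a : S) : Monotone (fun n : ℕ => rAnn (a ^ n)) := by
  refine monotone_nat_of_le_succ fun n x hx => ?_
  rw [mem_rAnn] at hx ⊢
  rw [pow_succ', mul_assoc, hx, mul_zero]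

theorem exists_stable [IsNoetherian Sᵐᵒᵖ S] (a : S) :
    ∃ k, 0 < k ∧ ∀ x, (a ^ k) * (a ^ k) * x = 0 → a ^ k * x = 0 := by
  obtain ⟨n, hn⟩ := monotone_stabilizes_iff_noetherian.2 (inferInstance : IsNoetherian Sᵐᵒᵖ S)
    ⟨_, rAnn_pow_mono a⟩
  refine ⟨n + 1, Nat.succ_pos _, fun x hx => ?_⟩
  have h1 : rAnn (a ^ n) = rAnn (a ^ (n + 1)) := hn (n + 1) (by omega)
  have h2 : rAnn (a ^ n) = rAnn (a ^ (n + 1 + (n + 1))) := hn _ (by omega)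
  rw [← pow_add, ← mem_rAnn, ← h2, h1, mem_rAnn] at hx
  exact hx

theorem exists_good [IsNoetherian Sᵐᵒᵖ S] (hS : IsPrimeRing S) (J : RightIdeal S)
    (hJ : J ≠ ⊥) : ∃ a ∈ J, a ≠ 0 ∧ ∀ x, a * a * x = 0 → a * x = 0 := by
  obtain ⟨b, hb, hb0⟩ := (Submodule.ne_bot_iff _).1 hJ
  obtain ⟨s, hs⟩ : ∃ s, ¬ IsNilpotent (b * s) := by
    by_contra hcon
    push Not at hcon
    apply hb0
    apply utumi hS
    intro s
    obtain ⟨k, hk⟩ := hcon s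
    refine ⟨k + 1, ?_⟩
    have : ∀ k : ℕ, (s * b) ^ (k + 1) = s * (b * s) ^ k * b := by
      intro k
      induction k with
      | zero => simp
      | succ k ih => rw [pow_succ, ih, pow_succ]; simp only [mul_assoc]
    rw [this, hk, mul_zero, zero_mul]
  obtain ⟨k, hk, h⟩ := exists_stable (b * s)
  refine ⟨(b * s) ^ k, ?_, fun h0 => hs ⟨k, h0⟩, h⟩
  obtain ⟨j, rfl⟩ : ∃ j, k = j + 1 := ⟨k - 1, by omega⟩
  rw [pow_succ', mul_assoc]
  exact rmul_mem hb _

/-- An essential right ideal contains an element with zero right annihilator. -/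
theorem exists_rreg [IsNoetherianRing S] [IsNoetherian Sᵐᵒᵖ S] (hS : IsPrimeRing S)
    (E : RightIdeal S) (hE : ∀ J : RightIdeal S, J ≠ ⊥ → E ⊓ J ≠ ⊥) :
    ∃ c ∈ E, ∀ x, c * x = 0 → x = 0 := by
  have hne : Set.Nonempty {I : Ideal S | ∃ c ∈ E, (∀ x, c * c * x = 0 → c * x = 0) ∧
      I = lrAnn c} := ⟨lrAnn 0, 0, zero_mem _, by simp, rfl⟩
  obtain ⟨_, ⟨c, hcE, hc, rfl⟩, hmax⟩ :=
    WellFounded.has_min (wellFounded_gt : WellFounded ((· > ·) : Ideal S → _ → Prop)) _ hne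
  refine ⟨c, hcE, ?_⟩
  by_contra hcon
  push Not at hcon
  obtain ⟨x, hx, hx0⟩ := hcon
  have hr : rAnn c ≠ ⊥ := (Submodule.ne_bot_iff _).2 ⟨x, mem_rAnn.2 hx, hx0⟩
  obtain ⟨a, ha, ha0, haa⟩ := exists_good hS _ (hE _ hr)
  have haE : a ∈ E := ha.1
  have hca : c * a = 0 := mem_rAnn.1 ha.2
  have h1 : ∀ y, (c + a) * y = 0 → c * y = 0 ∧ a * y = 0 := by
    intro y hy
    have h2 : c * y = 0 := by
      apply hc
      have : c * ((c + a) * y) = c * c * y + c * a * y := by noncomm_ring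
      rw [hy, hca] at this
      simpa using this.symm
    refine ⟨h2, ?_⟩
    rwa [add_mul, h2, zero_add] at hy
  have h3 : ∀ y, (c + a) * (c + a) * y = 0 → (c + a) * y = 0 := by
    intro y hy
    rw [mul_assoc] at hy
    obtain ⟨h4, h5⟩ := h1 _ hy
    have h6 : c * y = 0 := by
      apply hc
      have : c * ((c + a) * y) = c * c * y + c * a * y := by noncomm_ring
      rw [h4, hca] at this
      simpa using this.symm
    have h7 : a * y = 0 := by
      apply haa
      rw [add_mul, h6, zero_add, ← mul_assoc] at h5
      exact h5
    rw [add_mul, h6, h7, add_zero]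
  refine hmax (lrAnn (c + a)) ⟨c + a, add_mem hcE haE, h3, rfl⟩ ?_
  refine lt_of_le_of_ne ?_ ?_
  · intro y hy z hz
    exact hy z (h1 z hz).1
  · intro heq
    have : a ∈ lrAnn (c + a) := fun z hz => (h1 z hz).2
    rw [← heq] at this
    have h8 : a * a = 0 := this a hca
    apply ha0
    have := haa 1 (by rw [h8, zero_mul])
    simpa using this

theorem singular_zero [IsNoetherian Sᵐᵒᵖ S] (hS : IsPrimeRing S) (z : S)
    (hz : ∀ J : RightIdeal S, J ≠ ⊥ → rAnn z ⊓ J ≠ ⊥) : z = 0 := by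
  apply utumi hS
  intro s
  obtain ⟨k, hk, h⟩ := exists_stable (s * z)
  refine ⟨k, ?_⟩
  by_contra h0
  have hJ : LinearMap.range (lmulR ((s * z) ^ k)) ≠ ⊥ :=
    (Submodule.ne_bot_iff _).2 ⟨(s * z) ^ k, ⟨1, mul_one _⟩, h0⟩
  obtain ⟨y, ⟨hy1, ⟨x, rfl⟩⟩, hy0⟩ := (Submodule.ne_bot_iff _).1 (hz _ hJ)
  apply hy0
  apply h
  have hy2 : z * ((s * z) ^ k * x) = 0 := mem_rAnn.1 hy1
  obtain ⟨j, hj⟩ : ∃ j, k = j + 1 := ⟨k - 1, by omega⟩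
  rw [mul_assoc]
  nth_rewrite 1 [hj]
  rw [pow_succ, mul_assoc, mul_assoc s, hy2, mul_zero, mul_zero]

theorem range_essential [IsNoetherian Sᵐᵒᵖ S] (c : S) (hc : ∀ x, c * x = 0 → x = 0)
    (J : RightIdeal S) (h : ∀ x, c * x ∈ J → c * x = 0) : J = ⊥ := by
  let F : ℕ → RightIdeal S := fun n =>
    Nat.rec ⊥ (fun _ T => J ⊔ T.map (lmulR c)) n
  have hF : ∀ n, F (n + 1) = J ⊔ (F n).map (lmulR c) := fun n => rfl
  have hmono : Monotone F := by
    refine monotone_nat_of_le_succ fun n => ?_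
    induction n with
    | zero => exact bot_le
    | succ n ih => rw [hF, hF (n + 1)]; exact sup_le_sup_left (Submodule.map_mono ih) _
  obtain ⟨n, hn⟩ := monotone_stabilizes_iff_noetherian.2 (inferInstance : IsNoetherian Sᵐᵒᵖ S)
    ⟨F, hmono⟩
  have hn' : F (n + 1) ≤ F n := (hn (n + 1) (by omega)).ge
  clear hn
  induction n with
  | zero => exact eq_bot_iff.2 (le_trans le_sup_left hn')
  | succ n ih =>
    apply ih
    intro x hx
    have h1 : c * x ∈ F (n + 1) := hn' (by
      show c * x ∈ J ⊔ (F (n + 1)).map (lmulR c)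
      exact Submodule.mem_sup_right ⟨x, hx, rfl⟩)
    rw [hF] at h1
    obtain ⟨j, hj, _, ⟨y, hy, rfl⟩, hjy⟩ := Submodule.mem_sup.1 h1
    have hjy' : j + c * y = c * x := hjy
    have h2 : c * (x - y) = j := by rw [mul_sub, ← hjy']; abel
    have h3 := hc _ (h (x - y) (h2 ▸ hj))
    rw [sub_eq_zero.1 h3]
    exact hy

/-- Goldie: an essential right ideal contains a regular element. -/
theorem goldie [IsNoetherianRing S] [IsNoetherian Sᵐᵒᵖ S] (hS : IsPrimeRing S)
    (E : RightIdeal S) (hE : ∀ J : RightIdeal S, J ≠ ⊥ → E ⊓ J ≠ ⊥) :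
    ∃ c ∈ E, (∀ x, c * x = 0 → x = 0) ∧ (∀ x, x * c = 0 → x = 0) := by
  obtain ⟨c, hcE, hc⟩ := exists_rreg hS E hE
  refine ⟨c, hcE, hc, fun x hx => ?_⟩
  apply singular_zero hS
  intro J hJ hbot
  apply hJ
  refine range_essential c hc J fun y hy => ?_
  have : c * y ∈ rAnn x ⊓ J := ⟨mem_rAnn.2 (by rw [← mul_assoc, hx, zero_mul]), hy⟩
  rw [hbot] at this
  simpa using this

/-- The Krull-dimension part in a prime Noetherian ring. -/
theorem main_prime [IsNoetherianRing S] [IsNoetherian Sᵐᵒᵖ S] (hS : IsPrimeRing S)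
    (E : RightIdeal S) (γ : Ordinal.{u}) (h1 : DevLE γ (Set.Ici E))
    (h2 : ¬ DevLE γ (RightIdeal S)) :
    ∃ c ∈ E, (∀ x, c * x = 0 → x = 0) ∧ (∀ x, x * c = 0 → x = 0) := by
  apply goldie hS
  intro U hU hEU
  apply h2
  have hUd : DevLE γ (Set.Iic U) := by
    refine DevLE.of_strictMono γ (fun x : Set.Iic U =>
      (⟨x.1 ⊔ E, Set.mem_Ici.2 le_sup_right⟩ : Set.Ici E)) ?_ h1
    intro x y hxy
    have hxy' : x.1 < y.1 := hxy
    have key : ∀ z : Set.Iic U, (z.1 ⊔ E) ⊓ U = z.1 := fun z => by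
      rw [sup_inf_assoc_of_le E z.2, hEU, sup_bot_eq]
    refine lt_of_le_of_ne (sup_le_sup_right hxy'.le E) ?_
    intro h
    have h' : x.1 ⊔ E = y.1 ⊔ E := congrArg Subtype.val h
    have := key x
    rw [h', key y] at this
    exact hxy'.ne this.symm
  obtain ⟨T, hT, hmax⟩ :=
    WellFounded.has_min (wellFounded_gt : WellFounded ((· > ·) : RightIdeal S → _ → Prop))
      {T : RightIdeal S | DevLE γ (Set.Iic T)} ⟨U, hUd⟩
  have hbig : ∀ J : RightIdeal S, DevLE γ (Set.Iic J) → J ≤ T := by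
    intro J hJ
    have h3 := hmax (T ⊔ J) (DevLE.sup hT hJ)
    by_contra hcon
    exact h3 (lt_of_le_of_ne le_sup_left (fun h => hcon (h ▸ le_sup_right)))
  have htwo : ∀ s, ∀ x ∈ T, s * x ∈ T := by
    intro s x hx
    have h3 : T.map (lmulR s) ≤ T := by
      apply hbig
      refine DevLE.of_strictMono γ (fun K : Set.Iic (T.map (lmulR s)) =>
        (⟨K.1.comap (lmulR s) ⊓ T, Set.mem_Iic.2 inf_le_right⟩ : Set.Iic T)) ?_ hT
      intro K K' hKK
      have hKK' : K.1 < K'.1 := hKK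
      refine lt_of_le_not_ge (inf_le_inf_right T (Submodule.comap_mono hKK'.le)) ?_
      intro h
      apply hKK'.not_ge
      intro y hy
      obtain ⟨t, ht, rfl⟩ := K'.2 hy
      exact (h (show t ∈ K'.1.comap (lmulR s) ⊓ T from ⟨hy, ht⟩)).1
    exact h3 ⟨x, hx, rfl⟩
  have hT0 : T ≠ ⊥ := fun h => hU (eq_bot_iff.2 (h ▸ hbig U hUd))
  obtain ⟨c, hcT, hc, -⟩ := goldie hS T (by
    intro J hJ hbot
    obtain ⟨t, ht, ht0⟩ := (Submodule.ne_bot_iff _).1 hT0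
    obtain ⟨j, hj, hj0⟩ := (Submodule.ne_bot_iff _).1 hJ
    rcases hS j t (fun r => by
      have : j * r * t ∈ T ⊓ J := ⟨htwo _ _ ht, by rw [mul_assoc]; exact rmul_mem hj _⟩
      rw [hbot] at this
      simpa using this) with h | h
    · exact hj0 h
    · exact ht0 h)
  have hinj : Function.Injective (lmulR c) := by
    intro x y hxy
    have hxy' : c * x = c * y := hxy
    exact sub_eq_zero.1 (hc _ (by rw [mul_sub, hxy', sub_self]))
  refine DevLE.of_strictMono γ (fun K : RightIdeal S =>
    (⟨K.map (lmulR c), ?_⟩ : Set.Iic T)) ?_ hT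
  · rintro _ ⟨x, -, rfl⟩
    exact rmul_mem hcT x
  · intro K K' hKK
    exact Submodule.map_strictMono_of_injective hinj hKK

end Goldie

section Transfer

variable {R S : Type u} [Ring R] [Ring S]

/-- Preimage of a right ideal under a ring homomorphism. -/
def pullR (π : R →+* S) (J : RightIdeal S) : RightIdeal R where
  carrier := {r | π r ∈ J}
  add_mem' := by intro a b ha hb; simpa using add_mem ha hb
  zero_mem' := by simp
  smul_mem' := by
    intro r a ha
    show π (a * unop r) ∈ J
    rw [map_mul]
    exact rmul_mem ha _

/-- Image of a right ideal under a surjective ring homomorphism. -/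
def pushR (π : R →+* S) (hπ : Function.Surjective π) (J : RightIdeal R) : RightIdeal S where
  carrier := {s | ∃ r ∈ J, π r = s}
  add_mem' := by
    rintro _ _ ⟨a, ha, rfl⟩ ⟨b, hb, rfl⟩
    exact ⟨a + b, add_mem ha hb, map_add _ _ _⟩
  zero_mem' := ⟨0, zero_mem _, map_zero _⟩
  smul_mem' := by
    rintro r _ ⟨a, ha, rfl⟩
    obtain ⟨t, ht⟩ := hπ (unop r)
    refine ⟨a * t, rmul_mem ha t, ?_⟩
    show π (a * t) = π a * unop r
    rw [map_mul, ht]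

theorem pullR_strictMono (π : R →+* S) (hπ : Function.Surjective π) :
    StrictMono (pullR π) := by
  intro J J' h
  refine lt_of_le_not_ge (fun x hx => h.le hx) ?_
  intro hle
  apply h.not_ge
  intro s hs
  obtain ⟨r, rfl⟩ := hπ s
  exact hle (show r ∈ pullR π J' from hs)

/-- The key fact: a right ideal with small quotient meets `C(p)`. -/
theorem key_fact [IsNoetherianRing R] [IsNoetherian Rᵐᵒᵖ R] (p : RightIdeal R)
    (hp : IsPrimeIdeal p) (I : RightIdeal R) (γ : Ordinal.{u})
    (h1 : DevLE γ (Submodule Rᵐᵒᵖ (R ⧸ I))) (h2 : ¬ DevLE γ (Submodule Rᵐᵒᵖ (R ⧸ p))) :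
    ((I : Set R) ∩ CMod p).Nonempty := by
  obtain ⟨htwo, htop, hprime⟩ := hp
  let P : Ideal R :=
    { carrier := (p : Set R)
      add_mem' := fun ha hb => p.add_mem ha hb
      zero_mem' := p.zero_mem
      smul_mem' := fun r x hx => htwo r x hx }
  have hmemP : ∀ x, x ∈ P ↔ x ∈ p := fun x => Iff.rfl
  haveI : P.IsTwoSided := ⟨fun b ha => rmul_mem (J := p) ha b⟩
  let π : R →+* (R ⧸ P) := Ideal.Quotient.mk P
  have hπ : Function.Surjective π := Ideal.Quotient.mk_surjective
  have hker : ∀ x, π x = 0 ↔ x ∈ p := fun x => Ideal.Quotient.eq_zero_iff_mem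
  haveI : IsNoetherianRing (R ⧸ P) := isNoetherianRing_of_surjective R (R ⧸ P) π hπ
  haveI : IsNoetherian (R ⧸ P)ᵐᵒᵖ (R ⧸ P) := by
    rw [isNoetherian_iff']
    exact (pullR_strictMono π hπ).wellFoundedGT
  have hS : IsPrimeRing (R ⧸ P) := by
    intro a b hab
    obtain ⟨a, rfl⟩ := hπ a
    obtain ⟨b, rfl⟩ := hπ b
    rw [hker, hker]
    apply hprime
    intro r
    rw [← hker, map_mul, map_mul]
    exact hab _
  obtain ⟨c, ⟨r, hrI, rfl⟩, hc1, hc2⟩ := main_prime hS (pushR π hπ I) γ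
    (by
      refine DevLE.of_strictMono γ (fun K : Set.Ici (pushR π hπ I) =>
        (pullR π K.1).map I.mkQ) ?_ h1
      intro K K' hKK
      have hKK' : K.1 < K'.1 := hKK
      have hlt := pullR_strictMono π hπ hKK'
      have key : ∀ z : Set.Ici (pushR π hπ I),
          ((pullR π z.1).map I.mkQ).comap I.mkQ = pullR π z.1 := fun z => by
        rw [Submodule.comap_map_mkQ]
        exact sup_eq_right.2 (fun x hx => z.2 ⟨x, hx, rfl⟩)
      refine lt_of_le_of_ne (Submodule.map_mono hlt.le) ?_
      intro h
      have h' : (pullR π K.1).map I.mkQ = (pullR π K'.1).map I.mkQ := h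
      have := key K
      rw [h', key K'] at this
      exact hlt.ne this.symm)
    (by
      intro hd
      apply h2
      refine DevLE.of_strictMono γ (fun K : Submodule Rᵐᵒᵖ (R ⧸ p) =>
        pushR π hπ (K.comap p.mkQ)) ?_ hd
      intro K K' hKK
      refine lt_of_le_not_ge ?_ ?_
      · rintro _ ⟨x, hx, rfl⟩
        exact ⟨x, hKK.le hx, rfl⟩
      · intro h
        apply hKK.not_ge
        intro y hy
        obtain ⟨x, rfl⟩ := Submodule.mkQ_surjective p y
        obtain ⟨x', hx', hxx⟩ := h (show π x ∈ pushR π hπ (K'.comap p.mkQ) from ⟨x, hy, rfl⟩)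
        have h3 : x' - x ∈ p := by rw [← hker, map_sub, hxx, sub_self]
        have h4 : p.mkQ x' = p.mkQ x := (Submodule.Quotient.eq p).2 h3
        rw [← h4]
        exact hx')
  refine ⟨r, hrI, fun a ha => ?_, fun a ha => ?_⟩
  · rw [← hker] at ha ⊢
    exact hc1 _ (by rw [← map_mul]; exact ha)
  · rw [← hker] at ha ⊢
    exact hc2 _ (by rw [← map_mul]; exact ha)

end Transfer

/-- If `X` has the right intersection condition then `g ⊆ k`. -/
theorem stmt_11 {R : Type u} [Ring R] (hpr : IsPrimeRing R)
    [IsNoetherianRing R] [IsNoetherian Rᵐᵒᵖ R]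
    (n : ℕ) (hn : rKdim R R = (n : Ordinal)) (m : ℕ) (hm : m ≤ n)
    (X : Set (RightIdeal R))
    (hX : ∀ p ∈ X, IsPrimeIdeal p ∧ rKdim R (R ⧸ p) = (m : Ordinal))
    (V : Set R) (hV : V = {v : R | ∀ p ∈ X, v ∈ CMod p})
    (hint : ∀ I : RightIdeal R,
      (∀ p ∈ X, ((I : Set R) ∩ CMod p).Nonempty) → ((I : Set R) ∩ V).Nonempty) :
    ∀ I : RightIdeal R, rKdim R (R ⧸ I) < (m : Ordinal) →
      ((I : Set R) ∩ V).Nonempty := by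
  intro I hI
  have hm0 : m ≠ 0 := by
    rintro rfl
    simp at hI
  apply hint
  intro p hp
  obtain ⟨hpp, hpd⟩ := hX p hp
  have hne : Set.Nonempty {α : Ordinal.{u} | DevLE α (Submodule Rᵐᵒᵖ R)} := by
    by_contra hcon
    rw [Set.not_nonempty_iff_eq_empty] at hcon
    unfold rKdim at hn
    rw [hcon, Ordinal.sInf_empty] at hn
    have : n = 0 := by exact_mod_cast hn.symm
    omega
  obtain ⟨α, hα⟩ := hne
  have hmem : DevLE (rKdim R (R ⧸ I)) (Submodule Rᵐᵒᵖ (R ⧸ I)) := by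
    refine csInf_mem (s := {α : Ordinal.{u} | DevLE α (Submodule Rᵐᵒᵖ (R ⧸ I))}) ⟨α, ?_⟩
    refine DevLE.of_strictMono α (fun K => K.comap I.mkQ) ?_ hα
    intro K K' h
    refine lt_of_le_of_ne (Submodule.comap_mono h.le) fun he => h.ne ?_
    exact Submodule.comap_injective_of_surjective (Submodule.mkQ_surjective I) he
  refine key_fact p hpp I _ hmem fun hd => ?_
  have : rKdim R (R ⧸ p) ≤ rKdim R (R ⧸ I) := csInf_le' hd
  rw [hpd] at this
  exact absurd hI this.not_gt
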